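/- arXiv:1505.07694 — 4 statements merged into one kernel-verified Lean document; each statement's English description precedes it below -/
import Mathlib

section
/- Nonnegativity of the thermal energy term: for all ϑ, ϑ̄ > 0, Q(ϑ) − Q(ϑ̄) − ϑ̄ (R(ϑ) − R(ϑ̄)) ≥ 0. -/
open Set

/-- **Nonnegativity of the thermal energy term.**
For all ϑ, ϑ̄ > 0, Q(ϑ) − Q(ϑ̄) − ϑ̄ (R(ϑ) − R(ϑ̄)) ≥ 0. -/
theorem thermal_energy_term_nonneg
    (Cv Q R : ℝ → ℝ)
    (hCv_smooth : ContDiffOn ℝ (⊤ : ℕ∞) Cv (Ioi 0))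
    (hCv_pos : ∀ ϑ > (0:ℝ), 0 < Cv ϑ)
    (hQ : ∀ ϑ > (0:ℝ), HasDerivAt Q (Cv ϑ) ϑ)
    (hR : ∀ ϑ > (0:ℝ), HasDerivAt R (Cv ϑ / ϑ) ϑ) :
    ∀ ϑ > (0:ℝ), ∀ ϑb > (0:ℝ),
      0 ≤ Q ϑ - Q ϑb - ϑb * (R ϑ - R ϑb) := by
  intro x hx b hb
  have hf : ∀ t > (0:ℝ), HasDerivAt (fun y => Q y - b * R y) (Cv t - b * (Cv t / t)) t :=
    fun t ht => (hQ t ht).sub ((hR t ht).const_mul b)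
  have hform : ∀ t > (0:ℝ), Cv t - b * (Cv t / t) = (Cv t / t) * (t - b) := by
    intro t ht
    have := ht.ne'
    field_simp
  rcases lt_trichotomy b x with h | h | h
  · obtain ⟨c, hc, he⟩ := exists_hasDerivAt_eq_slope (fun y => Q y - b * R y)
      (fun t => Cv t - b * (Cv t / t)) h
      (fun t ht => (hf t (lt_of_lt_of_le hb ht.1)).continuousAt.continuousWithinAt)
      (fun t ht => hf t (lt_trans hb ht.1))
    have hc0 : 0 < c := lt_trans hb hc.1
    have hq : 0 < Cv c / c := div_pos (hCv_pos c hc0) hc0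
    simp only [hform c hc0] at he
    rw [eq_div_iff (sub_pos.2 h).ne'] at he
    have := mul_pos (mul_pos hq (sub_pos.2 hc.1)) (sub_pos.2 h)
    linarith
  · subst h
    simp
  · obtain ⟨c, hc, he⟩ := exists_hasDerivAt_eq_slope (fun y => Q y - b * R y)
      (fun t => Cv t - b * (Cv t / t)) h
      (fun t ht => (hf t (lt_of_lt_of_le hx ht.1)).continuousAt.continuousWithinAt)
      (fun t ht => hf t (lt_trans hx ht.1))
    have hc0 : 0 < c := lt_trans hx hc.1
    have hq : 0 < Cv c / c := div_pos (hCv_pos c hc0) hc0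
    simp only [hform c hc0] at he
    rw [eq_div_iff (sub_pos.2 h).ne'] at he
    have := mul_pos (mul_pos hq (sub_pos.2 hc.2)) (sub_pos.2 h)
    linarith
end

section
/- Pointwise vacuum control by the elastic Bregman term: assume there exist c > 0, δ > 0 and γ ≥ 2 such that p_e(τ) ≥ c τ^{−γ} for all τ ∈ (0, δ). Fix τ̄ > 0. Then there exist constants C₁ > 0 and C > 0 such that for every τ > 0 with 1/τ > C₁, one has 1/τ ≤ C ( P_e(τ) − P_e(τ̄) + p_e(τ̄)(τ − τ̄) ). -/
open Set

/-- **Pointwise vacuum control by the elastic Bregman term.**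
Assume p_e(τ) ≥ c τ^{−γ} on (0,δ) for some c, δ > 0 and γ ≥ 2.  Fix τ̄ > 0.
Then there are constants C₁ > 0 and C > 0 such that for every τ > 0 with
1/τ > C₁ one has 1/τ ≤ C (P_e(τ) − P_e(τ̄) + p_e(τ̄)(τ − τ̄)). -/
theorem pointwise_vacuum_control
    (pe Pe : ℝ → ℝ)
    (hpeC1 : ContDiffOn ℝ 1 pe (Ioi 0))
    (hpe_nonneg : ∀ τ > (0:ℝ), 0 ≤ pe τ)
    (hpe_mono : ∀ τ > (0:ℝ), deriv pe τ ≤ 0)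
    (hPe : ∀ τ > (0:ℝ), HasDerivAt Pe (-(pe τ)) τ)
    (c δ γ : ℝ) (hc : 0 < c) (hδ : 0 < δ) (hγ : 2 ≤ γ)
    (hgrowth : ∀ τ ∈ Ioo (0:ℝ) δ, c * τ ^ (-γ) ≤ pe τ)
    (τb : ℝ) (hτb : 0 < τb) :
    ∃ C₁ > (0:ℝ), ∃ C > (0:ℝ), ∀ τ > (0:ℝ),
      C₁ < 1 / τ → 1 / τ ≤ C * (Pe τ - Pe τb + pe τb * (τ - τb)) := by
  obtain ⟨m, hm0, hm1, hmδ⟩ : ∃ m : ℝ, 0 < m ∧ m ≤ 1 ∧ m < δ :=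
    ⟨min δ 1 / 2, by positivity, by linarith [min_le_right δ 1],
      by linarith [min_le_left δ 1]⟩
  have hlow : ∀ t : ℝ, 0 < t → t ≤ m → c * (t ^ 2)⁻¹ ≤ pe t := by
    intro t ht htm
    refine le_trans ?_ (hgrowth t ⟨ht, by linarith⟩)
    have h : t ^ (-2 : ℝ) ≤ t ^ (-γ) :=
      Real.rpow_le_rpow_of_exponent_ge ht (by linarith) (by linarith)
    have h2 : t ^ (-2 : ℝ) = (t ^ 2)⁻¹ := by
      rw [Real.rpow_neg ht.le]
      norm_num
    rw [← h2]
    exact mul_le_mul_of_nonneg_left h hc.le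
  have hder : ∀ t : ℝ, 0 < t →
      HasDerivAt (fun s => Pe s - c * s⁻¹) (-(pe t) - c * (-(t ^ 2)⁻¹)) t := by
    intro t ht
    exact (hPe t ht).sub ((hasDerivAt_inv ht.ne').const_mul c)
  have hanti : AntitoneOn (fun s => Pe s - c * s⁻¹) (Ioc 0 m) := by
    apply antitoneOn_of_deriv_nonpos (convex_Ioc 0 m)
    · intro t ht
      exact (hder t ht.1).continuousAt.continuousWithinAt
    · intro t ht
      rw [interior_Ioc] at ht
      exact (hder t ht.1).differentiableAt.differentiableWithinAt
    · intro t ht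
      rw [interior_Ioc] at ht
      rw [(hder t ht.1).deriv]
      linarith [hlow t ht.1 ht.2.le]
  obtain ⟨K, hK0, hK⟩ : ∃ K : ℝ, 0 ≤ K ∧
      -(Pe m - c * m⁻¹ - Pe τb - pe τb * τb) ≤ K :=
    ⟨_, abs_nonneg _, neg_le_abs _⟩
  refine ⟨1 / m + 2 * K / c, by positivity, 2 / c, by positivity, ?_⟩
  intro τ hτ hC
  have hKc : 0 ≤ 2 * K / c := by positivity
  have hm' : 0 < 1 / m := by positivity
  have hτm : τ ≤ m := (one_div_lt_one_div hm0 hτ |>.1 (by linarith)).le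
  have h1 := hanti ⟨hτ, hτm⟩ ⟨hm0, le_rfl⟩ hτm
  simp only at h1
  have h2 : 0 ≤ pe τb * τ := mul_nonneg (hpe_nonneg τb hτb) hτ.le
  have h3 : 2 * K / c < 1 / τ := by linarith
  rw [div_lt_iff₀ hc] at h3
  rw [div_mul_eq_mul_div, le_div_iff₀ hc]
  rw [one_div] at *
  nlinarith
end

section
/- Integrated vacuum control: assume there exist c > 0, δ > 0 and γ ≥ 2 such that p_e(τ) ≥ c τ^{−γ} for all τ ∈ (0, δ). Let τ_L, τ_R, ϑ_L, ϑ_R > 0 and set (τ̄, ϑ̄)(x) = (τ_L, ϑ_L) for x < 0 and (τ_R, ϑ_R) for x > 0. Then there exist constants C₁ > 0 and C > 0 such that for every ε > 0 and every measurable τ : ℝ → (0,∞) for which the function x ↦ ϑ̄(x)(P_ϑ(τ(x)) − P_ϑ(τ̄(x)) + p_ϑ(τ̄(x))(τ(x) − τ̄(x))) + (P_e(τ(x)) − P_e(τ̄(x)) + p_e(τ̄(x))(τ(x) − τ̄(x))) is integrable on ℝ, one has ∫_{−ε}^{ε} (1/τ(x)) dx ≤ 2 C₁ ε + C ∫_ℝ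 [ ϑ̄(x)(P_ϑ(τ(x)) − P_ϑ(τ̄(x)) + p_ϑ(τ̄(x))(τ(x) − τ̄(x))) + (P_e(τ(x)) − P_e(τ̄(x)) + p_e(τ̄(x))(τ(x) − τ̄(x))) ] dx. -/
open Set MeasureTheory

lemma bregman_nonneg (p P : ℝ → ℝ) (hC : ContDiffOn ℝ 1 p (Ioi 0))
    (hm : ∀ τ > (0:ℝ), deriv p τ ≤ 0) (hP : ∀ τ > (0:ℝ), HasDerivAt P (-(p τ)) τ)
    (s t : ℝ) (hs : 0 < s) (ht : 0 < t) : 0 ≤ P s - P t + p t * (s - t) := by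
  have hanti : AntitoneOn p (Ioi 0) := by
    apply antitoneOn_of_deriv_nonpos (convex_Ioi 0) hC.continuousOn
    · rw [interior_Ioi]; exact hC.differentiableOn (by norm_num)
    · rw [interior_Ioi]; exact fun x hx => hm x hx
  have mv : ∀ a b : ℝ, 0 < a → a < b → ∃ ξ ∈ Ioo a b, -(p ξ) * (b - a) = P b - P a := by
    intro a b ha hab
    obtain ⟨ξ, hξ, h⟩ := exists_hasDerivAt_eq_slope P (fun x => -(p x)) hab
      (fun x hx => (hP x (ha.trans_le hx.1)).continuousAt.continuousWithinAt)
      (fun x hx => hP x (ha.trans hx.1))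
    refine ⟨ξ, hξ, ?_⟩
    have : b - a ≠ 0 := by linarith
    rw [h]; field_simp
  rcases lt_trichotomy s t with h | h | h
  · obtain ⟨ξ, hξ, e⟩ := mv s t hs h
    have := hanti (mem_Ioi.2 (hs.trans hξ.1)) (mem_Ioi.2 ht) hξ.2.le
    nlinarith
  · subst h; simp
  · obtain ⟨ξ, hξ, e⟩ := mv t s ht h
    have := hanti (mem_Ioi.2 ht) (mem_Ioi.2 (ht.trans hξ.1)) hξ.1.le
    nlinarith

lemma vacuum_pointwise (pe Pe : ℝ → ℝ) (hC : ContDiffOn ℝ 1 pe (Ioi 0))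
    (hnn : ∀ τ > (0:ℝ), 0 ≤ pe τ)
    (hm : ∀ τ > (0:ℝ), deriv pe τ ≤ 0) (hP : ∀ τ > (0:ℝ), HasDerivAt Pe (-(pe τ)) τ)
    (c δ γ : ℝ) (hc : 0 < c) (hδ : 0 < δ) (hγ : 2 ≤ γ)
    (hgrowth : ∀ τ ∈ Ioo (0:ℝ) δ, c * τ ^ (-γ) ≤ pe τ) (t : ℝ) (ht : 0 < t) :
    ∃ M > (0:ℝ), ∀ s > (0:ℝ), 1 / s ≤ M + c⁻¹ * (Pe s - Pe t + pe t * (s - t)) := by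
  obtain ⟨d, hd0, hdδ, hd1⟩ : ∃ d : ℝ, 0 < d ∧ d < δ ∧ d ≤ 1 := by
    refine ⟨min (δ/2) 1, by positivity, ?_, min_le_right _ _⟩
    exact (min_le_left _ _).trans_lt (by linarith)
  set K := Pe d - c / d - Pe t - pe t * t with hK
  refine ⟨|K| / c + 1 / d, by positivity, fun s hs => ?_⟩
  have hB := bregman_nonneg pe Pe hC hm hP s t hs ht
  rcases le_total d s with h | h
  · have h1 : 1 / s ≤ 1 / d := one_div_le_one_div_of_le hd0 h
    have h2 : 0 ≤ |K| / c := by positivity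
    have h3 := mul_nonneg (inv_nonneg.2 hc.le) hB
    linarith
  · have hder : ∀ x > (0:ℝ), HasDerivAt (fun x => Pe x - c * x⁻¹) (-(pe x) - c * (-(x^2)⁻¹)) x :=
      fun x hx => (hP x hx).sub ((hasDerivAt_inv hx.ne').const_mul c)
    have hanti : AntitoneOn (fun x => Pe x - c * x⁻¹) (Ioc 0 d) := by
      apply antitoneOn_of_deriv_nonpos (convex_Ioc 0 d)
      · exact fun x hx => (hder x hx.1).continuousAt.continuousWithinAt
      · rw [interior_Ioc]
        exact fun x hx => (hder x hx.1).differentiableAt.differentiableWithinAt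
      · rw [interior_Ioc]
        intro x hx
        rw [(hder x hx.1).deriv]
        have h1 := hgrowth x ⟨hx.1, hx.2.trans hdδ⟩
        have h2 : x ^ (-2:ℝ) ≤ x ^ (-γ) :=
          Real.rpow_le_rpow_of_exponent_ge hx.1 (hx.2.le.trans hd1) (by linarith)
        have h3 : x ^ (-2:ℝ) = (x^2)⁻¹ := by
          rw [Real.rpow_neg hx.1.le]; norm_num
        rw [h3] at h2
        have := mul_le_mul_of_nonneg_left h2 hc.le
        linarith
    have h1 := hanti ⟨hs, h⟩ ⟨hd0, le_rfl⟩ h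
    simp only at h1
    have h2 : c * s⁻¹ + K ≤ Pe s - Pe t + pe t * (s - t) := by
      have := mul_nonneg (hnn t ht) hs.le
      rw [hK, div_eq_mul_inv]; nlinarith
    have h3 := mul_le_mul_of_nonneg_left h2 (inv_nonneg.2 hc.le)
    have h4 : c⁻¹ * (c * s⁻¹ + K) = 1 / s + K / c := by field_simp
    have h5 : -(|K| / c) ≤ K / c := by
      rw [← neg_div]; exact div_le_div_of_nonneg_right (neg_abs_le K) hc.le
    have h6 : 0 < 1 / d := by positivity
    linarith


/-- **Integrated vacuum control.**
Assume p_e(τ) ≥ c τ^{−γ} on (0,δ) with c, δ > 0, γ ≥ 2.  Let τ_L, τ_R, ϑ_L, ϑ_R > 0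
and let (τ̄, ϑ̄)(x) = (τ_L, ϑ_L) for x < 0, (τ_R, ϑ_R) for x > 0.  Then there are
constants C₁ > 0, C > 0 such that for every ε > 0 and every measurable
τ : ℝ → (0,∞) for which the weighted pressure Bregman density is integrable,
∫_{−ε}^{ε} 1/τ ≤ 2 C₁ ε + C ∫_ℝ [ϑ̄ (P_ϑ(τ) − P_ϑ(τ̄) + p_ϑ(τ̄)(τ − τ̄))
                                   + (P_e(τ) − P_e(τ̄) + p_e(τ̄)(τ − τ̄))]. -/
theorem integrated_vacuum_control
    (pe pθ Pe Pθ : ℝ → ℝ)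
    (hpeC1 : ContDiffOn ℝ 1 pe (Ioi 0)) (hpθC1 : ContDiffOn ℝ 1 pθ (Ioi 0))
    (hpe_nonneg : ∀ τ > (0:ℝ), 0 ≤ pe τ) (hpθ_nonneg : ∀ τ > (0:ℝ), 0 ≤ pθ τ)
    (hpe_mono : ∀ τ > (0:ℝ), deriv pe τ ≤ 0) (hpθ_mono : ∀ τ > (0:ℝ), deriv pθ τ ≤ 0)
    (hPe : ∀ τ > (0:ℝ), HasDerivAt Pe (-(pe τ)) τ)
    (hPθ : ∀ τ > (0:ℝ), HasDerivAt Pθ (-(pθ τ)) τ)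
    (c δ γ : ℝ) (hc : 0 < c) (hδ : 0 < δ) (hγ : 2 ≤ γ)
    (hgrowth : ∀ τ ∈ Ioo (0:ℝ) δ, c * τ ^ (-γ) ≤ pe τ)
    (τL τR ϑL ϑR : ℝ) (hτL : 0 < τL) (hτR : 0 < τR) (hϑL : 0 < ϑL) (hϑR : 0 < ϑR)
    (τb ϑb : ℝ → ℝ)
    (hτbdef : ∀ x : ℝ, τb x = if x < 0 then τL else τR)
    (hϑbdef : ∀ x : ℝ, ϑb x = if x < 0 then ϑL else ϑR) :
    ∃ C₁ > (0:ℝ), ∃ C > (0:ℝ), ∀ ε > (0:ℝ), ∀ τ : ℝ → ℝ,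
      Measurable τ → (∀ x, 0 < τ x) →
      Integrable (fun x =>
        ϑb x * (Pθ (τ x) - Pθ (τb x) + pθ (τb x) * (τ x - τb x))
          + (Pe (τ x) - Pe (τb x) + pe (τb x) * (τ x - τb x))) →
      (∫ x in (-ε)..ε, 1 / τ x)
        ≤ 2 * C₁ * ε + C * ∫ x : ℝ,
            (ϑb x * (Pθ (τ x) - Pθ (τb x) + pθ (τb x) * (τ x - τb x))
              + (Pe (τ x) - Pe (τb x) + pe (τb x) * (τ x - τb x))) := by
  obtain ⟨ML, hML, hL⟩ := vacuum_pointwise pe Pe hpeC1 hpe_nonneg hpe_mono hPe c δ γ hc hδ hγ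
    hgrowth τL hτL
  obtain ⟨MR, hMR, hR⟩ := vacuum_pointwise pe Pe hpeC1 hpe_nonneg hpe_mono hPe c δ γ hc hδ hγ
    hgrowth τR hτR
  have hci : 0 < c⁻¹ := inv_pos.2 hc
  refine ⟨ML + MR, by positivity, c⁻¹, hci, fun ε hε τ hτm hτ hint => ?_⟩
  have hτb : ∀ x, 0 < τb x := fun x => by rw [hτbdef]; split_ifs <;> assumption
  have hϑb : ∀ x, 0 < ϑb x := fun x => by rw [hϑbdef]; split_ifs <;> assumption
  set F : ℝ → ℝ := fun x =>
        ϑb x * (Pθ (τ x) - Pθ (τb x) + pθ (τb x) * (τ x - τb x))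
          + (Pe (τ x) - Pe (τb x) + pe (τb x) * (τ x - τb x)) with hF
  have hθ : ∀ x, 0 ≤ ϑb x * (Pθ (τ x) - Pθ (τb x) + pθ (τb x) * (τ x - τb x)) := fun x =>
    mul_nonneg (hϑb x).le (bregman_nonneg pθ Pθ hpθC1 hpθ_mono hPθ _ _ (hτ x) (hτb x))
  have hF0 : ∀ x, 0 ≤ F x := fun x =>
    add_nonneg (hθ x) (bregman_nonneg pe Pe hpeC1 hpe_mono hPe _ _ (hτ x) (hτb x))
  have hpt : ∀ x, 1 / τ x ≤ (ML + MR) + c⁻¹ * F x := by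
    intro x
    have h1 : 1 / τ x ≤ (ML + MR) + c⁻¹ * (Pe (τ x) - Pe (τb x) + pe (τb x) * (τ x - τb x)) := by
      rw [hτbdef]
      split_ifs
      · linarith [hL (τ x) (hτ x)]
      · linarith [hR (τ x) (hτ x)]
    have h2 := mul_nonneg hci.le (hθ x)
    simp only [hF, mul_add c⁻¹]
    rw [mul_add c⁻¹] at h1
    linarith
  rw [intervalIntegral.integral_of_le (by linarith)]
  have hconst : IntegrableOn (fun _ : ℝ => ML + MR) (Ioc (-ε) ε) :=
    integrableOn_const (by simp)
  have hFi : IntegrableOn (fun x => c⁻¹ * F x) (Ioc (-ε) ε) := (hint.const_mul _).integrableOn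
  calc ∫ x in Ioc (-ε) ε, 1 / τ x ≤ ∫ x in Ioc (-ε) ε, ((ML + MR) + c⁻¹ * F x) := by
        apply integral_mono_of_nonneg
        · exact Filter.Eventually.of_forall fun x => (one_div_pos.2 (hτ x)).le
        · exact hconst.add hFi
        · exact Filter.Eventually.of_forall hpt
    _ = 2 * (ML + MR) * ε + c⁻¹ * ∫ x in Ioc (-ε) ε, F x := by
        rw [integral_add hconst hFi, integral_const_mul, setIntegral_const]
        simp only [measureReal_def, Real.volume_Ioc, smul_eq_mul]
        rw [ENNReal.toReal_ofReal (by linarith)]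
        ring
    _ ≤ 2 * (ML + MR) * ε + c⁻¹ * ∫ x, F x := by
        have := setIntegral_le_integral (s := Ioc (-ε) ε) hint (Filter.Eventually.of_forall hF0)
        have := mul_le_mul_of_nonneg_left this hci.le
        linarith
end

section
/- Heat-flux cross-term estimate: let κ > 0, ε > 0 and ϑ_L, ϑ_R > 0, and set m = min(ϑ_L, ϑ_R). Let τ : ℝ → (0,∞) be continuous and ϑ : ℝ → (0,∞) be C¹ such that h := ϑ′/(τ ϑ) is differentiable with h′ integrable on ℝ and h(x) → 0 as x → ±∞, and such that ϑ′²/(τ ϑ²) and 1/τ are integrable on [−ε, ε]. Then −∫_ℝ ( η(x/ε) ϑ_L + η(−x/ε) ϑ_R ) κ h′(x) dx ≤ (1/4) m ∫_{−ε}^{ε} κ ϑ′(x)²/(τ(x) ϑ(x)²) dx + (9 (ϑ_L − ϑ_R)² / (16 m)) (κ/ε²) ∫_{−ε}^{ε} (1/τ(x)) dx. -/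
open MeasureTheory Filter Topology Set

/-- The cutoff function η: η(x) = 1 for x ≤ −1, η(x) = (1/4)x³ − (3/4)x + 1/2
for −1 ≤ x ≤ 1, and η(x) = 0 for x ≥ 1. -/
noncomputable def cutoff (x : ℝ) : ℝ :=
  if x ≤ -1 then 1 else if x ≤ 1 then x ^ 3 / 4 - 3 / 4 * x + 1 / 2 else 0


noncomputable def dcut (x : ℝ) : ℝ := 3 / 4 * min (x ^ 2) 1 - 3 / 4

lemma hasDerivAt_paste {f g f' g' : ℝ → ℝ} {a : ℝ} (hf : ∀ x, HasDerivAt f (f' x) x)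
    (hg : ∀ x, HasDerivAt g (g' x) x) (h0 : f a = g a) (h1 : f' a = g' a) (x : ℝ) :
    HasDerivAt (fun x => if x ≤ a then f x else g x) (if x ≤ a then f' x else g' x) x := by
  rcases lt_trichotomy x a with h | h | h
  · rw [if_pos h.le]
    refine (hf x).congr_of_eventuallyEq ?_
    filter_upwards [Iio_mem_nhds h] with y hy
    simp [le_of_lt (show y < a from hy)]
  · subst h
    rw [if_pos le_rfl]
    have A : HasDerivWithinAt (fun y => if y ≤ x then f y else g y) (f' x) (Iic x) x :=
      (hf x).hasDerivWithinAt.congr (fun y hy => if_pos hy) (if_pos le_rfl)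
    have B : HasDerivWithinAt (fun y => if y ≤ x then f y else g y) (f' x) (Ici x) x := by
      rw [h1]
      refine (hg x).hasDerivWithinAt.congr (fun y hy => ?_) (by simp [h0])
      rcases eq_or_lt_of_le (show x ≤ y from hy) with h | h
      · subst h; simp [h0]
      · simp [not_le.mpr h]
    have := A.union B
    rwa [Iic_union_Ici, hasDerivWithinAt_univ] at this
  · rw [if_neg (not_le.mpr h)]
    refine (hg x).congr_of_eventuallyEq ?_
    filter_upwards [Ioi_mem_nhds h] with y hy
    simp [not_le.mpr (show a < y from hy)]

lemma hasDerivAt_cutoff (x : ℝ) : HasDerivAt cutoff (dcut x) x := by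
  have hp : ∀ x : ℝ, HasDerivAt (fun x : ℝ => x ^ 3 / 4 - 3 / 4 * x + 1 / 2)
      (3 / 4 * x ^ 2 - 3 / 4) x := by
    intro x
    have := ((((hasDerivAt_id x).pow 3).div_const 4).sub
      ((hasDerivAt_id x).const_mul (3 / 4))).add_const (1 / 2 : ℝ)
    exact this.congr_deriv (by simp only [id, mul_one]; norm_num; ring)
  have h1 := hasDerivAt_paste (a := 1) hp (fun x => hasDerivAt_const x (0 : ℝ))
    (by norm_num) (by norm_num)
  have h2 := hasDerivAt_paste (a := -1) (fun x => hasDerivAt_const x (1 : ℝ)) h1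
    (by norm_num) (by norm_num) x
  have e : dcut x = if x ≤ -1 then 0 else if x ≤ 1 then 3 / 4 * x ^ 2 - 3 / 4 else 0 := by
    unfold dcut
    split_ifs with h h'
    · rw [min_eq_right (by nlinarith)]; norm_num
    · rw [min_eq_left (by nlinarith)]
    · rw [min_eq_right (by nlinarith)]; norm_num
  rw [e]
  exact h2

lemma cutoff_bd (x : ℝ) : |cutoff x| ≤ 1 := by
  unfold cutoff
  split_ifs with h h'
  · simp
  · push Not at h
    rw [abs_le]
    constructor
    · nlinarith [mul_nonneg (sq_nonneg (x - 1)) (by linarith : 0 ≤ x + 2)]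
    · nlinarith [mul_nonneg (sq_nonneg (x + 1)) (by linarith : 0 ≤ 2 - x)]
  · simp

lemma dcut_sq (x : ℝ) : dcut x ^ 2 ≤ 9 / 16 := by
  unfold dcut
  have a : 0 ≤ min (x ^ 2) 1 := le_min (sq_nonneg x) zero_le_one
  have b : min (x ^ 2) 1 ≤ 1 := min_le_right _ _
  nlinarith

lemma dcut_zero {x : ℝ} (h : 1 ≤ |x|) : dcut x = 0 := by
  unfold dcut
  rw [min_eq_right (by rw [← sq_abs]; nlinarith)]; norm_num

/-- **Heat-flux cross-term estimate.**
Let κ > 0, ε > 0, ϑ_L, ϑ_R > 0, m = min(ϑ_L, ϑ_R).  Let τ be continuous positive,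
ϑ be C¹ positive, with h = ϑ′/(τϑ) differentiable, h′ integrable, h → 0 at ±∞, and
ϑ′²/(τϑ²), 1/τ integrable on [−ε,ε].  Then
−∫ (η(x/ε)ϑ_L + η(−x/ε)ϑ_R) κ h′(x) dx
  ≤ (1/4) m ∫_{−ε}^{ε} κ ϑ′²/(τϑ²) + (9(ϑ_L−ϑ_R)²/(16 m)) (κ/ε²) ∫_{−ε}^{ε} 1/τ. -/
theorem heat_flux_cross_term_estimate
    (κ ε ϑL ϑR : ℝ) (hκ : 0 < κ) (hε : 0 < ε) (hϑL : 0 < ϑL) (hϑR : 0 < ϑR)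
    (τ ϑ : ℝ → ℝ)
    (hτcont : Continuous τ) (hτpos : ∀ x, 0 < τ x)
    (hϑC1 : ContDiff ℝ 1 ϑ) (hϑpos : ∀ x, 0 < ϑ x)
    (hhdiff : Differentiable ℝ (fun x => deriv ϑ x / (τ x * ϑ x)))
    (hh'int : Integrable (deriv (fun x => deriv ϑ x / (τ x * ϑ x))))
    (hhtop : Tendsto (fun x => deriv ϑ x / (τ x * ϑ x)) atTop (𝓝 0))
    (hhbot : Tendsto (fun x => deriv ϑ x / (τ x * ϑ x)) atBot (𝓝 0))
    (hint1 : IntegrableOn (fun x => (deriv ϑ x) ^ 2 / (τ x * (ϑ x) ^ 2)) (Icc (-ε) ε))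
    (hint2 : IntegrableOn (fun x => 1 / τ x) (Icc (-ε) ε)) :
    -∫ x : ℝ, (cutoff (x / ε) * ϑL + cutoff (-x / ε) * ϑR)
        * (κ * deriv (fun y => deriv ϑ y / (τ y * ϑ y)) x)
      ≤ (1 / 4) * min ϑL ϑR * (∫ x in (-ε)..ε, κ * (deriv ϑ x) ^ 2 / (τ x * (ϑ x) ^ 2))
        + (9 * (ϑL - ϑR) ^ 2 / (16 * min ϑL ϑR)) * (κ / ε ^ 2)
          * ∫ x in (-ε)..ε, 1 / τ x := by
  set h : ℝ → ℝ := fun x => deriv ϑ x / (τ x * ϑ x) with hh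
  set m := min ϑL ϑR with hm
  have mpos : 0 < m := lt_min hϑL hϑR
  set φ : ℝ → ℝ := fun x => cutoff (x / ε) * ϑL + cutoff (-x / ε) * ϑR with hφ
  set ψ : ℝ → ℝ := fun x => dcut (x / ε) * ((ϑL - ϑR) / ε) with hψ
  have hder : ∀ x, HasDerivAt φ (ψ x) x := by
    intro x
    have a := ((hasDerivAt_cutoff (x / ε)).comp x ((hasDerivAt_id x).div_const ε)).mul_const ϑL
    have b := ((hasDerivAt_cutoff (-x / ε)).comp x
      ((hasDerivAt_id x).neg.div_const ε)).mul_const ϑR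
    have c := a.add b
    have : dcut (-x / ε) = dcut (x / ε) := by unfold dcut; rw [neg_div, neg_sq]
    refine c.congr_deriv ?_
    rw [this]
    simp only [hψ]
    ring
  have hφc : Continuous φ := continuous_iff_continuousAt.2 fun x => (hder x).continuousAt
  have hψc : Continuous ψ := by
    simp only [hψ]; unfold dcut; fun_prop
  have hφb : ∀ x, ‖φ x‖ ≤ ϑL + ϑR := by
    intro x
    have a := abs_le.1 (cutoff_bd (x / ε))
    have b := abs_le.1 (cutoff_bd (-x / ε))
    rw [Real.norm_eq_abs, abs_le]
    simp only [hφ]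
    constructor <;> nlinarith
  have hψ0 : ∀ x, x ∉ Icc (-ε) ε → ψ x = 0 := by
    intro x hx
    have : 1 ≤ |x / ε| := by
      rw [abs_div, abs_of_pos hε, one_le_div hε]
      by_contra hc
      push Not at hc
      have := abs_lt.1 hc
      exact hx ⟨this.1.le, this.2.le⟩
    simp only [hψ, dcut_zero this, zero_mul]
  have hhc : Continuous h := hhdiff.continuous
  have i1 : Integrable (φ * deriv h) :=
    hh'int.bdd_mul (c := ϑL + ϑR) hφc.aestronglyMeasurable (Eventually.of_forall hφb)
  have i2 : Integrable (ψ * h) := by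
    refine (hψc.mul hhc).integrable_of_hasCompactSupport ?_
    refine HasCompactSupport.intro (isCompact_Icc (a := -ε) (b := ε)) fun x hx => ?_
    simp [hψ0 x hx]
  have lim : ∀ l : Filter ℝ, Tendsto h l (𝓝 0) → Tendsto (φ * h) l (𝓝 0) := by
    intro l hl
    refine squeeze_zero_norm (a := fun x => (ϑL + ϑR) * ‖h x‖) (fun x => ?_) ?_
    · rw [Pi.mul_apply, norm_mul]
      exact mul_le_mul_of_nonneg_right (hφb x) (norm_nonneg _)
    · simpa using hl.norm.const_mul (ϑL + ϑR)
  have ibp := integral_mul_deriv_eq_deriv_mul (u := φ) (v := h) (u' := ψ) (v' := deriv h)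
    (fun x _ => hder x) (fun x _ => (hhdiff x).hasDerivAt) i1 i2 (lim _ hhbot) (lim _ hhtop)
  have e1 : -∫ x : ℝ, φ x * (κ * deriv h x) = κ * ∫ x in (-ε)..ε, ψ x * h x := by
    have : (fun x => φ x * (κ * deriv h x)) = fun x => κ * (φ x * deriv h x) := by
      ext x; ring
    rw [this, integral_const_mul, ibp, intervalIntegral.integral_of_le (by linarith),
      ← integral_Icc_eq_integral_Ioc, setIntegral_eq_integral_of_forall_compl_eq_zero]
    · ring
    · intro x hx; rw [hψ0 x hx, zero_mul]
  have e2 : (∫ x in (-ε)..ε, κ * (deriv ϑ x) ^ 2 / (τ x * (ϑ x) ^ 2))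
      = κ * ∫ x in (-ε)..ε, (deriv ϑ x) ^ 2 / (τ x * (ϑ x) ^ 2) := by
    rw [← intervalIntegral.integral_const_mul]
    simp only [mul_div_assoc]
  have j1 : IntervalIntegrable (fun x => (deriv ϑ x) ^ 2 / (τ x * (ϑ x) ^ 2)) volume (-ε) ε :=
    (intervalIntegrable_iff_integrableOn_Icc_of_le (by linarith)).2 hint1
  have j2 : IntervalIntegrable (fun x => 1 / τ x) volume (-ε) ε :=
    (intervalIntegrable_iff_integrableOn_Icc_of_le (by linarith)).2 hint2
  have key : ∫ x in (-ε)..ε, ψ x * h x ≤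
      ∫ x in (-ε)..ε, ((m / 4) * ((deriv ϑ x) ^ 2 / (τ x * (ϑ x) ^ 2))
        + (9 * (ϑL - ϑR) ^ 2 / (16 * m) / ε ^ 2) * (1 / τ x)) := by
    refine intervalIntegral.integral_mono_on (by linarith)
      ((hψc.mul hhc).intervalIntegrable _ _) ((j1.const_mul _).add (j2.const_mul _)) ?_
    intro x _
    have t := hτpos x
    have th := hϑpos x
    have s : ψ x ^ 2 ≤ 9 / 16 * ((ϑL - ϑR) / ε) ^ 2 := by
      simp only [hψ, mul_pow]
      exact mul_le_mul_of_nonneg_right (dcut_sq _) (sq_nonneg _)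
    have y1 : ψ x * h x ≤ (m / 4) * ((deriv ϑ x) ^ 2 / (τ x * (ϑ x) ^ 2))
        + (ψ x ^ 2 / m) * (1 / τ x) := by
      have : (m / 4) * ((deriv ϑ x) ^ 2 / (τ x * (ϑ x) ^ 2)) + (ψ x ^ 2 / m) * (1 / τ x)
          - ψ x * h x = (m * (deriv ϑ x / ϑ x) / 2 - ψ x) ^ 2 / (m * τ x) := by
        simp only [hh]
        field_simp
        ring
      have : 0 ≤ (m * (deriv ϑ x / ϑ x) / 2 - ψ x) ^ 2 / (m * τ x) := by positivity
      linarith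
    have y2 : (ψ x ^ 2 / m) * (1 / τ x)
        ≤ (9 * (ϑL - ϑR) ^ 2 / (16 * m) / ε ^ 2) * (1 / τ x) := by
      refine mul_le_mul_of_nonneg_right ?_ (by positivity)
      calc ψ x ^ 2 / m ≤ (9 / 16 * ((ϑL - ϑR) / ε) ^ 2) / m := by gcongr
        _ = _ := by field_simp
    linarith
  rw [intervalIntegral.integral_add (j1.const_mul _) (j2.const_mul _),
    intervalIntegral.integral_const_mul, intervalIntegral.integral_const_mul] at key
  have fin := mul_le_mul_of_nonneg_left key hκ.le
  rw [e1, e2]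
  refine fin.trans (le_of_eq ?_)
  ring
end
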